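/- For R > 0 let Q_R = {z ∈ ℂ : 0 < Re z < 2R and −R < Im z < R}. Let φ : ℂ → ℂ be holomorphic and injective on the right half-plane ℍ = {z ∈ ℂ : Re z > 0}, let H > 0 and 0 < α ≤ 1, let T ≥ 1, and suppose that the rescaled map satisfies the Hölder estimate |φ(T·w₁) − φ(T·w₂)| ≤ H·T·|φ′(T)|·|w₁ − w₂|^α for all w₁, w₂ ∈ Q₁. Then for all z₁, z₂ ∈ Q_T one has |φ(z₁) − φ(z₂)| ≤ 8H·|φ′(1)|·T^{2−α}·|z₁ − z₂|^α. -/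

import Mathlib

open Complex

/-- The half-open square `Q_R = {0 < Re z < 2R, -R < Im z < R}`. -/
def Qsq (R : ℝ) : Set ℂ :=
  {z : ℂ | 0 < z.re ∧ z.re < 2 * R ∧ -R < z.im ∧ z.im < R}

section Aux
open Complex MeasureTheory Set
open scoped ENNReal

theorem mean_zero (Q : ℂ → ℂ) (hQ : DifferentiableOn ℂ Q (Metric.ball 0 1)) (h0 : Q 0 = 0)
    (r : ℝ) (hr : 0 < r) (hr1 : r < 1) :
    ContinuousOn (fun θ : ℝ => Q (circleMap 0 r θ)) univ ∧
    ∫ θ in Ioo (-Real.pi) Real.pi, (Q (circleMap 0 r θ)).re = 0 := by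
  have hsub : Metric.closedBall (0:ℂ) r ⊆ Metric.ball 0 1 := Metric.closedBall_subset_ball hr1
  have hc : Continuous (fun θ : ℝ => Q (circleMap 0 r θ)) := by
    apply hQ.continuousOn.comp_continuous (continuous_circleMap 0 r)
    intro θ
    exact hsub (circleMap_mem_closedBall 0 hr.le θ)
  refine ⟨hc.continuousOn, ?_⟩
  have h1 : Real.circleAverage Q 0 r = Q 0 := by
    apply DiffContOnCl.circleAverage
    rw [abs_of_pos hr]
    apply DifferentiableOn.diffContOnCl
    rw [closure_ball _ hr.ne']
    exact hQ.mono hsub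
  rw [h0, Real.circleAverage_def, smul_eq_zero] at h1
  have h2 : ∫ θ in (0:ℝ)..2 * Real.pi, Q (circleMap 0 r θ) = 0 := by
    rcases h1 with h | h
    · have := Real.pi_pos
      simp at h
    · exact h
  have hper : Function.Periodic (fun θ : ℝ => Q (circleMap 0 r θ)) (2 * Real.pi) := by
    intro θ
    simp only [periodic_circleMap 0 r θ]
  have h3 := hper.intervalIntegral_add_eq (-Real.pi) 0
  rw [zero_add, h2] at h3
  rw [show -Real.pi + 2 * Real.pi = Real.pi by ring,
    intervalIntegral.integral_of_le (by linarith [Real.pi_pos]), integral_Ioc_eq_integral_Ioo] at h3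
  have hint : Integrable (fun θ : ℝ => Q (circleMap 0 r θ)) (volume.restrict (Ioo (-Real.pi) Real.pi)) :=
    (hc.integrableOn_Icc (a := -Real.pi) (b := Real.pi)).mono_set Ioo_subset_Icc_self
  have := integral_re hint
  simp only [RCLike.re_eq_complex_re] at this
  rw [this, h3]; simp

theorem ofReal_int_le {α : Type*} [MeasurableSpace α] (μ : Measure α) (f : α → ℝ)
    (hf : Integrable f μ) :
    ENNReal.ofReal (∫ x, f x ∂μ) ≤ ∫⁻ x, ENNReal.ofReal (f x) ∂μ := by
  have h : ∫ x, f x ∂μ ≤ ∫ x, max (f x) 0 ∂μ :=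
    integral_mono hf hf.pos_part (fun x => le_max_left _ _)
  refine (ENNReal.ofReal_le_ofReal h).trans ?_
  rw [ofReal_integral_eq_lintegral_ofReal hf.pos_part (Filter.Eventually.of_forall fun x => le_max_right _ _)]
  apply lintegral_mono
  intro x
  simp 

theorem gauss_total (ε : ℝ) (hε : 0 < ε) :
    ∫⁻ w : ℂ, ENNReal.ofReal (Real.exp (-ε * ‖w‖) / (4 * ‖w‖)) = ENNReal.ofReal (Real.pi / (2 * ε)) := by
  rw [← Complex.lintegral_comp_polarCoord_symm, polarCoord_target]
  have h1 : ∀ p ∈ Ioi (0:ℝ) ×ˢ Ioo (-Real.pi) Real.pi,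
      ENNReal.ofReal p.1 • ENNReal.ofReal (Real.exp (-ε * ‖Complex.polarCoord.symm p‖) / (4 * ‖Complex.polarCoord.symm p‖))
      = ENNReal.ofReal (Real.exp (-ε * p.1)) * ENNReal.ofReal (1/4) := by
    rintro ⟨r, θ⟩ ⟨hr, -⟩
    have hr : 0 < r := hr
    rw [norm_polarCoord_symm, smul_eq_mul, ← ENNReal.ofReal_mul hr.le, ← ENNReal.ofReal_mul (Real.exp_pos _).le]
    simp only [abs_of_pos hr]
    congr 1
    field_simp
  rw [setLIntegral_congr_fun (measurableSet_Ioi.prod measurableSet_Ioo) h1,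
    Measure.volume_eq_prod, ← Measure.prod_restrict]
  rw [lintegral_prod_mul (f := fun r : ℝ => ENNReal.ofReal (Real.exp (-ε * r))) (g := fun _ : ℝ => ENNReal.ofReal (1/4)) (by fun_prop) (by fun_prop)]
  rw [← ofReal_integral_eq_lintegral_ofReal (integrableOn_exp_mul_Ioi (by linarith) 0)
    (Filter.Eventually.of_forall fun x => (Real.exp_pos _).le), integral_exp_mul_Ioi (by linarith)]
  rw [setLIntegral_const, Real.volume_Ioo, ← ENNReal.ofReal_mul (by norm_num), ← ENNReal.ofReal_mul (by simp; positivity)]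
  congr 1
  simp
  field_simp
  ring

theorem det_mul (c : ℂ) :
    ((ContinuousLinearMap.toSpanSingleton ℂ c).restrictScalars ℝ : ℂ →L[ℝ] ℂ).det = ‖c‖ ^ 2 := by
  simp [ContinuousLinearMap.det, LinearMap.det_restrictScalars,
      Algebra.norm_complex_eq, Complex.normSq_eq_norm_sq]

theorem area_ineq (s : ℂ → ℂ) (hs : DifferentiableOn ℂ s (Metric.ball 0 1))
    (hs0 : ∀ z ∈ Metric.ball (0:ℂ) 1, s z ≠ 0)
    (hinj : InjOn (fun z => s z ^ 2 / z) (Metric.ball 0 1 \ {0}))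
    (δ ρ ε : ℝ) (hδ : 0 < δ) (hρ : ρ < 1) (hε : 0 < ε) :
    ∫⁻ p in Ioo δ ρ ×ˢ Ioo (-Real.pi) Real.pi, ENNReal.ofReal (p.1⁻¹ ^ 2 / 4 *
      ‖s (circleMap 0 p.1 p.2) - 2 * circleMap 0 p.1 p.2 * deriv s (circleMap 0 p.1 p.2)‖ ^ 2 *
        Real.exp (-ε * (‖s (circleMap 0 p.1 p.2)‖ ^ 2 / p.1))) ≤
      ENNReal.ofReal (Real.pi / (2 * ε)) := by
  set D : Set ℂ := Metric.ball 0 1 \ {0} with hD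
  have hDo : IsOpen D := Metric.isOpen_ball.sdiff isClosed_singleton
  have hder : ∀ z ∈ D, HasDerivAt (fun z => s z ^ 2 / z)
      (-(s z * (s z - 2 * z * deriv s z)) / z ^ 2) z := by
    rintro z ⟨hz, hz0⟩
    have hz0 : z ≠ 0 := hz0
    have h1 : HasDerivAt s (deriv s z) z :=
      (hs.differentiableAt (Metric.isOpen_ball.mem_nhds hz)).hasDerivAt
    convert! (h1.fun_pow 2).fun_div (hasDerivAt_id z) hz0 using 1
    simp
    ring
  have hA := lintegral_image_eq_lintegral_abs_det_fderiv_mul volume hDo.measurableSet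
    (f := fun z => s z ^ 2 / z)
    (f' := fun z => ((ContinuousLinearMap.toSpanSingleton ℂ
      (-(s z * (s z - 2 * z * deriv s z)) / z ^ 2)).restrictScalars ℝ : ℂ →L[ℝ] ℂ))
    (fun z hz => ((hder z hz).hasFDerivAt.restrictScalars ℝ).hasFDerivWithinAt) hinj
    (fun w => ENNReal.ofReal (Real.exp (-ε * ‖w‖) / (4 * ‖w‖)))
  have hB : ∫⁻ z in D, ENNReal.ofReal |((ContinuousLinearMap.toSpanSingleton ℂ
      (-(s z * (s z - 2 * z * deriv s z)) / z ^ 2)).restrictScalars ℝ : ℂ →L[ℝ] ℂ).det| *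
      ENNReal.ofReal (Real.exp (-ε * ‖s z ^ 2 / z‖) / (4 * ‖s z ^ 2 / z‖)) ≤
      ENNReal.ofReal (Real.pi / (2 * ε)) := by
    rw [← hA, ← gauss_total ε hε]
    exact setLIntegral_le_lintegral _ _
  refine le_trans ?_ hB
  rw [← lintegral_indicator hDo.measurableSet, ← Complex.lintegral_comp_polarCoord_symm, polarCoord_target]
  have hms : MeasurableSet (Ioo δ ρ ×ˢ Ioo (-Real.pi) Real.pi) := measurableSet_Ioo.prod measurableSet_Ioo
  refine le_trans (le_of_eq ?_) (lintegral_mono_set (s := Ioo δ ρ ×ˢ Ioo (-Real.pi) Real.pi) ?_)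
  · apply setLIntegral_congr_fun hms
    rintro ⟨r, θ⟩ ⟨⟨hr1, hr2⟩, -⟩
    simp only at hr1 hr2
    have hr : 0 < r := hδ.trans hr1
    have hz : Complex.polarCoord.symm (r, θ) = circleMap 0 r θ := by
      simp [circleMap, Complex.exp_mul_I]
    simp only
    rw [hz]
    have hn : ‖circleMap 0 r θ‖ = r := by simp [abs_of_pos hr]
    generalize circleMap 0 r θ = z at *
    have hzb : z ∈ Metric.ball (0:ℂ) 1 := by simp; linarith
    have hz0 : z ≠ 0 := by
      rintro rfl
      simp at hn; linarith
    have hzD : z ∈ D := ⟨hzb, hz0⟩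
    have hsz := hs0 z hzb
    rw [indicator_of_mem hzD, det_mul, smul_eq_mul, abs_of_nonneg (by positivity),
      ← ENNReal.ofReal_mul (by positivity), ← ENNReal.ofReal_mul hr.le]
    congr 1
    have : 0 < ‖s z‖ := by positivity
    simp only [norm_div, norm_pow, norm_neg, hn]
    rw [norm_mul (s z)]
    field_simp
  · rintro ⟨r, θ⟩ ⟨⟨hr1, hr2⟩, h⟩
    exact ⟨hδ.trans hr1, h⟩

theorem dslope_bound (f : ℂ → ℂ) (hf : DifferentiableOn ℂ f (Metric.ball 0 1)) (h0 : f 0 = 1)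
    (ρ : ℝ) (hρ : ρ < 1) : ∃ K : ℝ, 0 ≤ K ∧ ∀ z : ℂ, ‖z‖ ≤ ρ → ‖f z - 1‖ ≤ K * ‖z‖ := by
  have hd : DifferentiableOn ℂ (dslope f 0) (Metric.ball 0 1) :=
    (Complex.differentiableOn_dslope (Metric.ball_mem_nhds 0 one_pos)).2 hf
  obtain ⟨K, hK⟩ := (isCompact_closedBall (0:ℂ) ρ).exists_bound_of_continuousOn
    (hd.continuousOn.mono (Metric.closedBall_subset_ball hρ))
  refine ⟨max K 0, le_max_right _ _, fun z hz => ?_⟩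
  have h1 := hK z (by simpa using hz)
  have h2 := sub_smul_dslope f 0 z
  rw [h0, sub_zero, smul_eq_mul] at h2
  rw [← h2, norm_mul, mul_comm]
  gcongr
  exact h1.trans (le_max_left _ _)

theorem pointwise_alg (e s z a m : ℂ) (K ε r : ℝ) (hK : 0 ≤ K) (hε : 0 < ε) (hr : 0 < r)
    (hz : ‖z‖ = r) (he : ‖e - 1‖ ≤ K * r) (hs : ‖s - 1‖ ≤ K * r) (hr1 : r < 1)
    (hm : z * m = e - 1) :
    Real.exp (-ε / r) * (1 + ‖a‖ ^ 2 * r ^ 2 - ε * (2 * K ^ 2 * (2 + K) + (1 + K) ^ 2 * K ^ 2) * r +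
      2 * ((e - 1) + (starRingEnd ℂ) a * r ^ 2 * (m - a) - (ε / r : ℝ) * (s - 1)).re) ≤
    ‖e‖ ^ 2 * Real.exp (-ε * (‖s‖ ^ 2 / r)) := by
  set C := 2 * K ^ 2 * (2 + K) + (1 + K) ^ 2 * K ^ 2 with hC
  -- first: the lower bound for ‖e‖ ^ 2
  have h1 : 1 + ‖a‖ ^ 2 * r ^ 2 + 2 * ((e - 1) + (starRingEnd ℂ) a * r ^ 2 * (m - a)).re ≤ ‖e‖ ^ 2 := by
    have hk : ‖e‖ ^ 2 - (1 + ‖a‖ ^ 2 * r ^ 2 + 2 * ((e - 1) + (starRingEnd ℂ) a * r ^ 2 * (m - a)).re)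
        = ‖e - 1 - a * z‖ ^ 2 := by
      have he' : e = 1 + z * m := by rw [hm]; ring
      have hr2 : r ^ 2 = z.re * z.re + z.im * z.im := by
        rw [← hz, ← Complex.normSq_eq_norm_sq, Complex.normSq_apply]
      have hrc : ((r : ℂ) ^ 2) = ((z.re * z.re + z.im * z.im : ℝ) : ℂ) := by
        rw [← hr2]; push_cast; rfl
      rw [hrc, hr2, he']
      simp only [← Complex.normSq_eq_norm_sq, Complex.normSq_apply, Complex.add_re, Complex.add_im,
        Complex.sub_re, Complex.sub_im, Complex.mul_re, Complex.mul_im, Complex.one_re, Complex.one_im,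
        Complex.conj_re, Complex.conj_im, Complex.ofReal_re, Complex.ofReal_im]
      ring
    nlinarith [sq_nonneg ‖e - 1 - a * z‖]
  have hs2 : ‖s‖ ^ 2 - 1 = 2 * (s - 1).re + ‖s - 1‖ ^ 2 := by
    simp only [← Complex.normSq_eq_norm_sq, Complex.normSq_apply, Complex.sub_re, Complex.sub_im,
      Complex.one_re, Complex.one_im]
    ring
  have hKr : 0 ≤ K * r := by positivity
  have hKr1 : K * r ≤ K := by nlinarith
  have hen : ‖e‖ ≤ 1 + K * r := by
    have := norm_add_le (e - 1) 1
    simp at this; linarith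
  have hen2 : 1 - K * r ≤ ‖e‖ := by
    have := norm_sub_norm_le (1 : ℂ) e
    rw [norm_sub_rev] at this
    simp at this; linarith
  have hre := Complex.abs_re_le_norm (s - 1)
  have h2 : ‖e‖ ^ 2 * (‖s‖ ^ 2 - 1) ≤ 2 * (s - 1).re + C * r ^ 2 := by
    rw [hs2]
    have e1 : (‖e‖ ^ 2 - 1) * (s - 1).re ≤ (K * r * (2 + K)) * (K * r) := by
      have : |‖e‖ ^ 2 - 1| ≤ K * r * (2 + K) := by
        have e0 : ‖e‖ ^ 2 - 1 = (‖e‖ - 1) * (‖e‖ + 1) := by ring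
        rw [e0, abs_mul]
        apply mul_le_mul _ _ (abs_nonneg _) hKr
        · rw [abs_le]; constructor <;> linarith
        · rw [abs_of_nonneg (by positivity)]; linarith
      calc _ ≤ |(‖e‖ ^ 2 - 1) * (s - 1).re| := le_abs_self _
        _ = |‖e‖ ^ 2 - 1| * |(s - 1).re| := abs_mul _ _
        _ ≤ _ := mul_le_mul this (hre.trans hs) (abs_nonneg _) (by positivity)
    have e2 : ‖e‖ ^ 2 * ‖s - 1‖ ^ 2 ≤ (1 + K) ^ 2 * (K * r) ^ 2 := by
      gcongr
      linarith
    rw [hC]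
    nlinarith
  have h3 : Real.exp (-ε / r) * (1 - ε / r * (‖s‖ ^ 2 - 1)) ≤ Real.exp (-ε * (‖s‖ ^ 2 / r)) := by
    have : -ε * (‖s‖ ^ 2 / r) = -ε / r + (-(ε / r * (‖s‖ ^ 2 - 1))) := by field_simp; ring
    rw [this, Real.exp_add]
    gcongr
    linarith [Real.add_one_le_exp (-(ε / r * (‖s‖ ^ 2 - 1)))]
  have h4 : ‖e‖ ^ 2 * (Real.exp (-ε / r) * (1 - ε / r * (‖s‖ ^ 2 - 1))) ≤
      ‖e‖ ^ 2 * Real.exp (-ε * (‖s‖ ^ 2 / r)) := by gcongr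
  refine le_trans ?_ h4
  have h5 : ‖e‖ ^ 2 * (Real.exp (-ε / r) * (1 - ε / r * (‖s‖ ^ 2 - 1))) =
    Real.exp (-ε / r) * (‖e‖ ^ 2 - ε / r * (‖e‖ ^ 2 * (‖s‖ ^ 2 - 1))) := by ring
  rw [h5]
  gcongr
  have h6 : ε / r * (‖e‖ ^ 2 * (‖s‖ ^ 2 - 1)) ≤ ε / r * (2 * (s - 1).re + C * r ^ 2) := by gcongr
  have h7 : ε / r * (2 * (s - 1).re + C * r ^ 2) = 2 * (ε / r * (s - 1).re) + ε * C * r := by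
    field_simp
  have h8 : ((e - 1) + (starRingEnd ℂ) a * r ^ 2 * (m - a) - (ε / r : ℝ) * (s - 1)).re =
    ((e - 1) + (starRingEnd ℂ) a * r ^ 2 * (m - a)).re - ε / r * (s - 1).re := by
    rw [Complex.sub_re, Complex.re_ofReal_mul]
  rw [h8]
  linarith

theorem key_eps (s : ℂ → ℂ) (hs : DifferentiableOn ℂ s (Metric.ball 0 1))
    (hs0 : ∀ z ∈ Metric.ball (0:ℂ) 1, s z ≠ 0) (hs1 : s 0 = 1)
    (hinj : InjOn (fun z => s z ^ 2 / z) (Metric.ball 0 1 \ {0}))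
    (ρ : ℝ) (hρ0 : 0 < ρ) (hρ : ρ < 1) :
    ∃ C : ℝ, ∀ δ ε : ℝ, 0 < δ → δ < ρ → 0 < ε →
      (Real.exp (-ε / ρ) / ε + ‖deriv s 0‖ ^ 2 * ρ - ε * C * Real.log ρ) -
      (Real.exp (-ε / δ) / ε + ‖deriv s 0‖ ^ 2 * δ - ε * C * Real.log δ) ≤ 1 / ε := by
  set e : ℂ → ℂ := fun z => s z - 2 * z * deriv s z with he
  have hds : DifferentiableOn ℂ (deriv s) (Metric.ball 0 1) := hs.deriv Metric.isOpen_ball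
  have hed : DifferentiableOn ℂ e (Metric.ball 0 1) := by
    apply hs.sub
    exact (DifferentiableOn.mul (by fun_prop) hds)
  have he1 : e 0 = 1 := by simp [he, hs1]
  have hb0 : Metric.ball (0:ℂ) 1 ∈ nhds (0:ℂ) := Metric.ball_mem_nhds 0 one_pos
  set a : ℂ := deriv e 0 with ha
  have hae : a = - deriv s 0 := by
    have h1 := (hs.differentiableAt hb0).hasDerivAt
    have h2 := (hds.differentiableAt hb0).hasDerivAt
    have h3 := h1.fun_sub (((hasDerivAt_id (0:ℂ)).const_mul 2).fun_mul h2)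
    have h4 : HasDerivAt e _ 0 := h3
    rw [ha, h4.deriv]
    simp
    ring
  have han : ‖a‖ = ‖deriv s 0‖ := by rw [hae, norm_neg]
  rw [← han]
  obtain ⟨K1, hK1, hb1⟩ := dslope_bound s hs hs1 ρ hρ
  obtain ⟨K2, hK2, hb2⟩ := dslope_bound e hed he1 ρ hρ
  set K := max K1 K2 with hK
  have hK0 : 0 ≤ K := hK1.trans (le_max_left _ _)
  set C := 2 * K ^ 2 * (2 + K) + (1 + K) ^ 2 * K ^ 2 with hC
  have hC0 : 0 ≤ C := by positivity
  have hmd : DifferentiableOn ℂ (dslope e 0) (Metric.ball 0 1) :=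
    (Complex.differentiableOn_dslope hb0).2 hed
  refine ⟨C + ‖a‖ ^ 2, fun δ ε hδ hδρ hε => ?_⟩
  have harea := area_ineq s hs hs0 hinj δ ρ ε hδ hρ hε
  set C' := C + ‖a‖ ^ 2 with hC'
  let L2 : ℝ → ℝ := fun r => Real.pi / 2 * (Real.exp (-ε / r) / r ^ 2 + ‖a‖ ^ 2 - ε * C' / r)
  have hinner : ∀ r ∈ Ioo δ ρ, ENNReal.ofReal (L2 r) ≤
      ∫⁻ θ in Ioo (-Real.pi) Real.pi, ENNReal.ofReal (r⁻¹ ^ 2 / 4 *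
      ‖s (circleMap 0 r θ) - 2 * circleMap 0 r θ * deriv s (circleMap 0 r θ)‖ ^ 2 *
        Real.exp (-ε * (‖s (circleMap 0 r θ)‖ ^ 2 / r))) := by
    rintro r ⟨hr1, hr2⟩
    have hr : 0 < r := hδ.trans hr1
    have hr3 : r < 1 := hr2.trans hρ
    let Q : ℂ → ℂ := fun z => (e z - 1) + (starRingEnd ℂ) a * r ^ 2 * (dslope e 0 z - a)
      - (ε / r : ℝ) * (s z - 1)
    have hQd : DifferentiableOn ℂ Q (Metric.ball 0 1) := by
      apply DifferentiableOn.sub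
      · apply DifferentiableOn.add
        · exact hed.sub_const _
        · exact (hmd.sub_const _).const_mul _
      · exact (hs.sub_const _).const_mul _
    have hQ0 : Q 0 = 0 := by simp [Q, he1, hs1, dslope_same, ha]
    obtain ⟨hQc, hQi⟩ := mean_zero Q hQd hQ0 r hr hr3
    have hQc : Continuous (fun θ : ℝ => Q (circleMap 0 r θ)) := continuousOn_univ.1 hQc
    let Y : ℝ → ℝ := fun θ => r⁻¹ ^ 2 / 4 * (Real.exp (-ε / r) *
      (1 + ‖a‖ ^ 2 * r ^ 2 - ε * C * r + 2 * (Q (circleMap 0 r θ)).re))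
    have hQri : IntegrableOn (fun θ : ℝ => (Q (circleMap 0 r θ)).re) (Ioo (-Real.pi) Real.pi) :=
      ((Complex.continuous_re.comp hQc).integrableOn_Icc (a := -Real.pi) (b := Real.pi)).mono_set
        Ioo_subset_Icc_self
    have hci : ∀ c : ℝ, IntegrableOn (fun θ : ℝ => c) (Ioo (-Real.pi) Real.pi) := fun c =>
      integrableOn_const (by simp)
    have hYi : IntegrableOn Y (Ioo (-Real.pi) Real.pi) :=
      (((hci _).add (hQri.const_mul 2)).const_mul _).const_mul _
    have hYint : ∫ θ in Ioo (-Real.pi) Real.pi, Y θ = r⁻¹ ^ 2 / 4 * (Real.exp (-ε / r) *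
      ((1 + ‖a‖ ^ 2 * r ^ 2 - ε * C * r) * (2 * Real.pi))) := by
      simp only [Y]
      rw [integral_const_mul, integral_const_mul, integral_add (hci _) (hQri.const_mul 2),
        integral_const_mul, hQi, setIntegral_const]
      have : volume.real (Ioo (-Real.pi) Real.pi) = 2 * Real.pi := by
        rw [Real.volume_real_Ioo_of_le (by linarith [Real.pi_pos])]; ring
      rw [this, smul_eq_mul]
      ring
    calc ENNReal.ofReal (L2 r) ≤ ENNReal.ofReal (∫ θ in Ioo (-Real.pi) Real.pi, Y θ) := by
          apply ENNReal.ofReal_le_ofReal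
          rw [hYint]
          simp only [L2]
          set x := Real.exp (-ε / r) with hx
          have hx1 : x ≤ 1 := by
            rw [hx, Real.exp_le_one_iff]
            have : 0 < ε / r := by positivity
            rw [neg_div]; linarith
          have hx2 : 1 - ε / r ≤ x := by
            have := Real.add_one_le_exp (-ε / r)
            rw [neg_div] at this
            rw [hx, neg_div]; linarith
          have e1 : r⁻¹ ^ 2 / 4 * (x * ((1 + ‖a‖ ^ 2 * r ^ 2 - ε * C * r) * (2 * Real.pi))) =
            Real.pi / 2 * (x / r ^ 2 + x * ‖a‖ ^ 2 - x * (ε / r * C)) := by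
            field_simp
            ring
          rw [e1]
          apply mul_le_mul_of_nonneg_left _ (by positivity)
          have e2 : x * (ε / r * C) ≤ 1 * (ε / r * C) := by gcongr
          have e3 : (1 - ε / r) * ‖a‖ ^ 2 ≤ x * ‖a‖ ^ 2 := by gcongr
          have e4 : ε * C' / r = ε / r * C + ε / r * ‖a‖ ^ 2 := by rw [hC']; ring
          rw [e4]
          linarith
      _ ≤ ∫⁻ θ in Ioo (-Real.pi) Real.pi, ENNReal.ofReal (Y θ) := ofReal_int_le _ _ hYi
      _ ≤ _ := by
          apply lintegral_mono
          intro θ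
          apply ENNReal.ofReal_le_ofReal
          have hn : ‖circleMap 0 r θ‖ = r := by simp [abs_of_pos hr]
          simp only [Y]
          rw [mul_assoc (r⁻¹ ^ 2 / 4) (‖_‖ ^ 2)]
          apply mul_le_mul_of_nonneg_left _ (by positivity)
          have hm := sub_smul_dslope e 0 (circleMap 0 r θ)
          rw [sub_zero, smul_eq_mul, he1] at hm
          have hz1 := hb1 (circleMap 0 r θ) (by linarith)
          have hz2 := hb2 (circleMap 0 r θ) (by linarith)
          rw [hn] at hz1 hz2
          exact pointwise_alg (e (circleMap 0 r θ)) (s (circleMap 0 r θ)) (circleMap 0 r θ) a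
            (dslope e 0 (circleMap 0 r θ)) K ε r hK0 hε hr hn
            (hz2.trans (by gcongr; exact le_max_right _ _))
            (hz1.trans (by gcongr; exact le_max_left _ _)) hr3 hm
  have hderiv : ∀ r ∈ uIcc δ ρ, HasDerivAt (fun r => Real.pi / 2 *
      (Real.exp (-ε / r) / ε + ‖a‖ ^ 2 * r - ε * C' * Real.log r)) (L2 r) r := by
    intro r hr
    rw [uIcc_of_le hδρ.le] at hr
    have hr0 : 0 < r := hδ.trans_le hr.1
    have d1 : HasDerivAt (fun r : ℝ => -ε / r) (ε / r ^ 2) r := by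
      have := (hasDerivAt_inv hr0.ne').const_mul (-ε)
      convert! this using 1
      field_simp
    have d2 := ((d1.exp.div_const ε).fun_add ((hasDerivAt_id r).const_mul (‖a‖ ^ 2))).fun_sub
      ((Real.hasDerivAt_log hr0.ne').const_mul (ε * C'))
    have d3 := d2.const_mul (Real.pi / 2)
    convert! d3 using 1
    simp only [L2]
    field_simp
  have hL2c : ContinuousOn L2 (uIcc δ ρ) := by
    rw [uIcc_of_le hδρ.le]
    have hne : ∀ r ∈ Icc δ ρ, r ≠ 0 := fun r hr => (hδ.trans_le hr.1).ne'
    have hne2 : ∀ r ∈ Icc δ ρ, r ^ 2 ≠ 0 := fun r hr => pow_ne_zero 2 (hne r hr)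
    simp only [L2]
    apply ContinuousOn.mul continuousOn_const
    apply ContinuousOn.sub
    · apply ContinuousOn.add _ continuousOn_const
      apply ContinuousOn.div _ (by fun_prop) hne2
      apply ContinuousOn.rexp
      exact continuousOn_const.div continuousOn_id hne
    · exact continuousOn_const.div continuousOn_id hne
  have hftc := intervalIntegral.integral_eq_sub_of_hasDerivAt hderiv hL2c.intervalIntegrable
  rw [intervalIntegral.integral_of_le hδρ.le, integral_Ioc_eq_integral_Ioo] at hftc
  have hL2i : IntegrableOn L2 (Ioo δ ρ) := by
    rw [uIcc_of_le hδρ.le] at hL2c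
    exact (hL2c.integrableOn_Icc).mono_set Ioo_subset_Icc_self
  have hfin : ENNReal.ofReal (∫ r in Ioo δ ρ, L2 r) ≤ ENNReal.ofReal (Real.pi / (2 * ε)) := by
    refine (ofReal_int_le _ _ hL2i).trans (le_trans ?_ harea)
    rw [Measure.volume_eq_prod, setLIntegral_prod]
    · exact setLIntegral_mono' measurableSet_Ioo hinner
    · have hm : MeasurableSet (Ioo δ ρ ×ˢ Ioo (-Real.pi) Real.pi) := measurableSet_Ioo.prod measurableSet_Ioo
      apply AEMeasurable.ennreal_ofReal
      apply ContinuousOn.aemeasurable _ hm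
      have hcm : Continuous (fun p : ℝ × ℝ => circleMap 0 p.1 p.2) := by
        simp only [circleMap]; fun_prop
      have hmaps : MapsTo (fun p : ℝ × ℝ => circleMap 0 p.1 p.2)
          (Ioo δ ρ ×ˢ Ioo (-Real.pi) Real.pi) (Metric.ball 0 1) := by
        rintro ⟨r, θ⟩ ⟨⟨h1, h2⟩, -⟩
        simp only at h1 h2
        simp [abs_of_pos (hδ.trans h1)]
        linarith
      have c1 := hs.continuousOn.comp hcm.continuousOn hmaps
      have c2 := hed.continuousOn.comp hcm.continuousOn hmaps
      have hne : ∀ p ∈ Ioo δ ρ ×ˢ Ioo (-Real.pi) Real.pi, p.1 ≠ 0 := fun p hp => (hδ.trans hp.1.1).ne'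
      apply ContinuousOn.mul
      · apply ContinuousOn.mul
        · exact ((continuousOn_fst.inv₀ hne).pow 2).div_const 4
        · exact (c2.norm.pow 2)
      · apply ContinuousOn.rexp
        apply ContinuousOn.mul continuousOn_const
        exact (c1.norm.pow 2).div continuousOn_fst hne
  rw [ENNReal.ofReal_le_ofReal_iff (by positivity), hftc] at hfin
  have hpi := Real.pi_pos
  rw [← mul_sub] at hfin
  have : Real.pi / (2 * ε) = Real.pi / 2 * (1 / ε) := by field_simp
  rw [this] at hfin
  exact le_of_mul_le_mul_left hfin (by positivity)

theorem deriv_s_le (s : ℂ → ℂ) (hs : DifferentiableOn ℂ s (Metric.ball 0 1))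
    (hs0 : ∀ z ∈ Metric.ball (0:ℂ) 1, s z ≠ 0) (hs1 : s 0 = 1)
    (hinj : InjOn (fun z => s z ^ 2 / z) (Metric.ball 0 1 \ {0})) : ‖deriv s 0‖ ≤ 1 := by
  set A := ‖deriv s 0‖ with hA
  have hA0 : 0 ≤ A := norm_nonneg _
  have hstep : ∀ ρ : ℝ, 0 < ρ → ρ < 1 → A ^ 2 * ρ ≤ 1 / ρ := by
    intro ρ hρ0 hρ
    obtain ⟨C, hC⟩ := key_eps s hs hs0 hs1 hinj ρ hρ0 hρ
    have hineq : ∀ᶠ ε : ℝ in nhdsWithin 0 (Ioi 0),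
        A ^ 2 * (ρ - ε ^ 2) - C * (ε * Real.log ρ - 2 * (ε * Real.log ε)) ≤ 1 / ρ + 2 * ε := by
      have : Ioo 0 ρ ∈ nhdsWithin (0:ℝ) (Ioi 0) := Ioo_mem_nhdsGT hρ0
      filter_upwards [this] with ε hε
      obtain ⟨hε, hερ⟩ := hε
      have h := hC (ε ^ 2) ε (by positivity) (by nlinarith) hε
      rw [Real.log_pow] at h
      have e1 : Real.exp (-ε / ε ^ 2) / ε ≤ 2 * ε := by
        have q := Real.quadratic_le_exp_of_nonneg (x := 1 / ε) (by positivity)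
        have : -ε / ε ^ 2 = - (1 / ε) := by field_simp
        rw [this, Real.exp_neg, div_le_iff₀ hε]
        have hp : 0 < 1 / ε := by positivity
        have q2 : (1 / ε) ^ 2 / 2 ≤ Real.exp (1 / ε) := by linarith
        rw [inv_le_comm₀ (Real.exp_pos _) (by positivity)]
        refine le_trans (le_of_eq ?_) q2
        field_simp
      have e2 : 1 / ε - Real.exp (-ε / ρ) / ε ≤ 1 / ρ := by
        rw [← sub_div, div_le_iff₀ hε]
        have := Real.add_one_le_exp (-ε / ρ)
        have e3 : -ε / ρ = - (1 / ρ * ε) := by ring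
        rw [e3] at this ⊢
        linarith
      push_cast at h
      nlinarith
    have hcont : Continuous (fun ε : ℝ => 
        A ^ 2 * (ρ - ε ^ 2) - C * (ε * Real.log ρ - 2 * (ε * Real.log ε))) := by
      have := Real.continuous_mul_log
      fun_prop
    have hcont2 : Continuous (fun ε : ℝ => 1 / ρ + 2 * ε) := by fun_prop
    have := le_of_tendsto_of_tendsto ((hcont.tendsto 0).mono_left nhdsWithin_le_nhds)
      ((hcont2.tendsto 0).mono_left nhdsWithin_le_nhds) hineq
    simpa using this
  by_contra hlt
  push Not at hlt
  have h := hstep (1 / A) (by positivity) (by rw [div_lt_one (by linarith)]; exact hlt)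
  have hρ : ∀ ρ : ℝ, 0 < ρ → ρ < 1 → A * ρ ≤ 1 := by
    intro ρ h0 h1
    have := hstep ρ h0 h1
    rw [le_div_iff₀ h0] at this
    by_contra hh
    push Not at hh
    nlinarith
  have h5 := hρ ((1 + 1 / A) / 2) (by positivity) (by
    have : 1 / A < 1 := by rw [div_lt_one (by linarith)]; exact hlt
    linarith)
  have : A * ((1 + 1 / A) / 2) = (A + 1) / 2 := by field_simp
  rw [this] at h5
  linarith

theorem bieberbach_two (f : ℂ → ℂ) (hf : DifferentiableOn ℂ f (Metric.ball 0 1))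
    (hinj : InjOn f (Metric.ball 0 1)) (hf0 : f 0 = 0) (hf1 : deriv f 0 = 1) :
    ‖deriv (deriv f) 0‖ ≤ 4 := by
  have hb0 : Metric.ball (0:ℂ) 1 ∈ nhds (0:ℂ) := Metric.ball_mem_nhds 0 one_pos
  have h0m : (0:ℂ) ∈ Metric.ball (0:ℂ) 1 := Metric.mem_ball_self one_pos
  set d := dslope f 0 with hd
  have hdd : DifferentiableOn ℂ d (Metric.ball 0 1) :=
    (Complex.differentiableOn_dslope hb0).2 hf
  have hfd : ∀ z, f z = z * d z := by
    intro z
    have := sub_smul_dslope f 0 z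
    rw [hf0, sub_zero, sub_zero, smul_eq_mul] at this
    exact this.symm
  have hd0 : d 0 = 1 := by rw [hd, dslope_same, hf1]
  have hdne : ∀ z ∈ Metric.ball (0:ℂ) 1, d z ≠ 0 := by
    intro z hz h
    by_cases hz0 : z = 0
    · subst hz0; rw [hd0] at h; exact one_ne_zero h
    · apply hz0
      apply hinj hz h0m
      rw [hf0, hfd, h, mul_zero]
  have hddd : DifferentiableOn ℂ (deriv d) (Metric.ball 0 1) := hdd.deriv Metric.isOpen_ball
  have hda : ∀ z ∈ Metric.ball (0:ℂ) 1, HasDerivAt d (deriv d z) z := fun z hz =>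
    (hdd.differentiableAt (Metric.isOpen_ball.mem_nhds hz)).hasDerivAt
  obtain ⟨g, hg0, hg⟩ := ((hddd.div hdd hdne).isExactOn_ball).with_val_at 0 0
  have hconst : ∀ z ∈ Metric.ball (0:ℂ) 1, Complex.exp (-g z) * d z = 1 := by
    have hD : ∀ z ∈ Metric.ball (0:ℂ) 1, HasDerivAt (fun z => Complex.exp (-g z) * d z) 0 z := by
      intro z hz
      have := ((hg z hz).fun_neg.cexp).fun_mul (hda z hz)
      convert! this using 1
      have := hdne z hz
      simp only [Pi.div_apply]
      field_simp
      ring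
    intro z hz
    have := Metric.isOpen_ball.is_const_of_deriv_eq_zero (convex_ball (0:ℂ) 1).isPreconnected
      (f := fun z => Complex.exp (-g z) * d z)
      (fun z hz => (hD z hz).differentiableAt.differentiableWithinAt)
      (fun z hz => (hD z hz).deriv) hz h0m
    simp only [hg0, hd0] at this
    rw [this]; simp
  set s : ℂ → ℂ := fun z => Complex.exp (-g z / 2) with hs
  have hsd : ∀ z ∈ Metric.ball (0:ℂ) 1,
      HasDerivAt s (Complex.exp (-g z / 2) * (-(deriv d z / d z) / 2)) z := fun z hz =>
    ((hg z hz).fun_neg.div_const 2).cexp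
  have hs2 : ∀ z ∈ Metric.ball (0:ℂ) 1, s z ^ 2 = (d z)⁻¹ := by
    intro z hz
    apply eq_inv_of_mul_eq_one_left
    rw [← hconst z hz, hs]
    simp only
    rw [← Complex.exp_nat_mul]
    congr 2
    push_cast; ring
  have key := deriv_s_le s (fun z hz => (hsd z hz).differentiableAt.differentiableWithinAt)
    (fun z _ => Complex.exp_ne_zero _) (by simp [hs, hg0]) (by
      rintro z ⟨hz, hz0⟩ w ⟨hw, hw0⟩ h
      apply hinj hz hw
      simp only [hs2 z hz, hs2 w hw] at h
      rw [hfd, hfd]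
      have h' : (z * d z)⁻¹ = (w * d w)⁻¹ := by
        rw [mul_inv, mul_inv, mul_comm, mul_comm w⁻¹]; exact h
      exact inv_injective h')
  rw [(hsd 0 h0m).deriv, hg0, hd0] at key
  have hff : deriv (deriv f) 0 = 2 * deriv d 0 := by
    have h1 : deriv f =ᶠ[nhds 0] fun z => d z + z * deriv d z := by
      filter_upwards [hb0] with z hz
      have h2 : HasDerivAt f (1 * d z + z * deriv d z) z := by
        have := (hasDerivAt_id z).fun_mul (hda z hz)
        exact this.congr_of_eventuallyEq (Filter.Eventually.of_forall hfd)
      rw [h2.deriv, one_mul]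
    rw [h1.deriv_eq]
    have h3 := (hda 0 h0m).fun_add ((hasDerivAt_id (0:ℂ)).fun_mul
      (hddd.differentiableAt hb0).hasDerivAt)
    have h4 : HasDerivAt (fun z => d z + z * deriv d z) _ 0 := h3
    rw [h4.deriv]
    simp
    ring
  rw [hff]
  simp at key
  simp
  linarith

theorem halfplane_second (φ : ℂ → ℂ) (hdiff : DifferentiableOn ℂ φ {z : ℂ | 0 < z.re})
    (hinj : Set.InjOn φ {z : ℂ | 0 < z.re}) (t : ℝ) (ht : 0 < t) :
    t * ((starRingEnd ℂ) (deriv φ t) * deriv (deriv φ) t).re ≤ ‖deriv φ t‖ ^ 2 := by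
  by_cases h0 : deriv φ t = 0
  · simp [h0]
  have hopen : IsOpen {z : ℂ | 0 < z.re} := isOpen_lt continuous_const Complex.continuous_re
  have htc : (t : ℂ) ≠ 0 := by exact_mod_cast ht.ne'
  set M : ℂ → ℂ := fun ζ => t * (1 + ζ) / (1 - ζ) with hM
  have hne : ∀ ζ ∈ Metric.ball (0:ℂ) 1, 1 - ζ ≠ 0 := by
    intro ζ hζ h
    have : ζ = 1 := (sub_eq_zero.1 h).symm
    rw [this] at hζ
    simp at hζ
  have hMm : ∀ ζ ∈ Metric.ball (0:ℂ) 1, M ζ ∈ {z : ℂ | 0 < z.re} := by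
    intro ζ hζ
    have hn := hne ζ hζ
    have hnp : 0 < Complex.normSq (1 - ζ) := Complex.normSq_pos.2 hn
    have hζ1 : Complex.normSq ζ < 1 := by
      rw [Complex.normSq_eq_norm_sq]
      have : ‖ζ‖ < 1 := by simpa using hζ
      nlinarith [norm_nonneg ζ]
    have : (M ζ).re = t * (1 - Complex.normSq ζ) / Complex.normSq (1 - ζ) := by
      simp only [hM, Complex.div_re, Complex.mul_re, Complex.mul_im, Complex.add_re, Complex.add_im,
        Complex.sub_re, Complex.sub_im, Complex.one_re, Complex.one_im, Complex.ofReal_re,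
        Complex.ofReal_im]
      rw [← add_div]
      congr 1
      rw [Complex.normSq_apply]
      ring
    change 0 < (M ζ).re
    rw [this]
    have : 0 < 1 - Complex.normSq ζ := by linarith
    positivity
  have hMd : ∀ ζ ∈ Metric.ball (0:ℂ) 1, HasDerivAt M (2 * t / (1 - ζ) ^ 2) ζ := by
    intro ζ hζ
    have h1 := (((hasDerivAt_id ζ).const_add 1).const_mul (t:ℂ)).fun_div
      ((hasDerivAt_id ζ).const_sub 1) (hne ζ hζ)
    convert! h1 using 1
    simp
    ring
  have hφd : ∀ z ∈ {z : ℂ | 0 < z.re}, HasDerivAt φ (deriv φ z) z := fun z hz =>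
    (hdiff.differentiableAt (hopen.mem_nhds hz)).hasDerivAt
  have hφdd : ∀ z ∈ {z : ℂ | 0 < z.re}, HasDerivAt (deriv φ) (deriv (deriv φ) z) z := fun z hz =>
    ((hdiff.deriv hopen).differentiableAt (hopen.mem_nhds hz)).hasDerivAt
  set c : ℂ := 2 * t * deriv φ t with hc
  have hc0 : c ≠ 0 := by simp [hc, htc, h0]
  set f : ℂ → ℂ := fun ζ => (φ (M ζ) - φ t) / c with hf
  have hM0 : M 0 = t := by simp [hM]
  have h0m : (0:ℂ) ∈ Metric.ball (0:ℂ) 1 := Metric.mem_ball_self one_pos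
  have hb0 : Metric.ball (0:ℂ) 1 ∈ nhds (0:ℂ) := Metric.ball_mem_nhds 0 one_pos
  have hfd : ∀ ζ ∈ Metric.ball (0:ℂ) 1,
      HasDerivAt f (deriv φ (M ζ) * (2 * t / (1 - ζ) ^ 2) / c) ζ := by
    intro ζ hζ
    exact (((hφd _ (hMm ζ hζ)).comp ζ (hMd ζ hζ)).sub_const _).div_const _
  have key := bieberbach_two f (fun z hz => (hfd z hz).differentiableAt.differentiableWithinAt)
    (by
      intro z hz w hw h
      simp only [hf] at h
      have h1 : φ (M z) = φ (M w) := by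
        have := (div_left_inj' hc0).1 h
        exact sub_left_injective this
      have h2 := hinj (hMm z hz) (hMm w hw) h1
      simp only [hM] at h2
      rw [div_eq_div_iff (hne z hz) (hne w hw)] at h2
      have h3 : (2 * (t:ℂ)) * (z - w) = 0 := by linear_combination h2
      have h4 : (2 * (t:ℂ)) ≠ 0 := by simp [htc]
      exact sub_eq_zero.1 ((mul_eq_zero.1 h3).resolve_left h4))
    (by simp [hf, hM0])
    (by
      rw [(hfd 0 h0m).deriv, hM0, hc]
      field_simp
      simp)
  have hff : deriv (deriv f) 0 = 2 * (t * deriv (deriv φ) t + deriv φ t) / deriv φ t := by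
    have h1 : deriv f =ᶠ[nhds 0] fun ζ => deriv φ (M ζ) * (2 * t / (1 - ζ) ^ 2) / c := by
      filter_upwards [hb0] with z hz
      exact (hfd z hz).deriv
    rw [h1.deriv_eq]
    have h2 : HasDerivAt (fun ζ : ℂ => 2 * (t:ℂ) / (1 - ζ) ^ 2) (4 * (t:ℂ)) (0:ℂ) := by
      have a1 := (((hasDerivAt_id (0:ℂ)).const_sub 1).fun_pow 2)
      have a2 := (hasDerivAt_const (0:ℂ) (2 * (t:ℂ))).fun_div a1 (by simp)
      convert! a2 using 1
      simp
      ring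
    have h3 := (((hφdd _ (hMm 0 h0m)).comp 0 (hMd 0 h0m)).fun_mul h2).div_const c
    have h4 : HasDerivAt (fun ζ => deriv φ (M ζ) * (2 * t / (1 - ζ) ^ 2) / c) _ 0 := h3
    rw [h4.deriv]
    simp only [Function.comp, hM0, hc]
    field_simp
    ring
  rw [hff, norm_div, norm_mul, div_le_iff₀ (by positivity)] at key
  have key2 : ‖t * deriv (deriv φ) t + deriv φ t‖ ≤ 2 * ‖deriv φ t‖ := by
    simp at key; linarith
  have h5 : ((starRingEnd ℂ) (deriv φ t) * (t * deriv (deriv φ) t + deriv φ t)).re ≤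
      2 * ‖deriv φ t‖ ^ 2 := by
    refine (Complex.re_le_norm _).trans ?_
    rw [norm_mul, RCLike.norm_conj]
    nlinarith [norm_nonneg (deriv φ t)]
  have h6 : (starRingEnd ℂ) (deriv φ t) * (t * deriv (deriv φ) t + deriv φ t) =
      t * ((starRingEnd ℂ) (deriv φ t) * deriv (deriv φ) t) + ((‖deriv φ t‖ ^ 2 : ℝ) : ℂ) := by
    have : (starRingEnd ℂ) (deriv φ t) * deriv φ t = ((‖deriv φ t‖ ^ 2 : ℝ) : ℂ) := by
      rw [mul_comm, Complex.mul_conj, Complex.normSq_eq_norm_sq]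
    rw [← this]; ring
  rw [h6, Complex.add_re, Complex.re_ofReal_mul, Complex.ofReal_re] at h5
  linarith

theorem halfplane_distortion (φ : ℂ → ℂ) (hdiff : DifferentiableOn ℂ φ {z : ℂ | 0 < z.re})
    (hinj : Set.InjOn φ {z : ℂ | 0 < z.re}) (T : ℝ) (hT : 1 ≤ T) :
    ‖deriv φ T‖ ≤ T * ‖deriv φ 1‖ := by
  have hopen : IsOpen {z : ℂ | 0 < z.re} := isOpen_lt continuous_const Complex.continuous_re
  let u : ℝ → ℝ := fun t => ((deriv φ t).re ^ 2 + (deriv φ t).im ^ 2) / t ^ 2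
  have hu : ∀ t : ℝ, 0 < t → HasDerivAt u
      ((2 * ((starRingEnd ℂ) (deriv φ t) * deriv (deriv φ) t).re * t ^ 2 -
        ‖deriv φ t‖ ^ 2 * (2 * t)) / (t ^ 2) ^ 2) t := by
    intro t ht
    have h1 : HasDerivAt (deriv φ) (deriv (deriv φ) t) (t : ℂ) :=
      ((hdiff.deriv hopen).differentiableAt (hopen.mem_nhds (by simpa using ht))).hasDerivAt
    have h2 : HasDerivAt (fun x : ℝ => deriv φ x) (deriv (deriv φ) t) t := h1.comp_ofReal
    have hre : HasDerivAt (fun x : ℝ => (deriv φ x).re) (deriv (deriv φ) t).re t :=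
      Complex.reCLM.hasFDerivAt.comp_hasDerivAt t h2
    have him : HasDerivAt (fun x : ℝ => (deriv φ x).im) (deriv (deriv φ) t).im t :=
      Complex.imCLM.hasFDerivAt.comp_hasDerivAt t h2
    have h3 := ((hre.fun_pow 2).fun_add (him.fun_pow 2)).fun_div ((hasDerivAt_id t).fun_pow 2)
      (by simp [ht.ne'])
    convert! h3 using 1
    simp only [← Complex.normSq_eq_norm_sq, Complex.normSq_apply, Complex.mul_re, Complex.conj_re,
      Complex.conj_im, id]
    congr 1
    push_cast
    ring
  have hanti : AntitoneOn u (Icc 1 T) := by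
    apply antitoneOn_of_deriv_nonpos (convex_Icc 1 T)
    · intro t ht
      exact (hu t (by linarith [ht.1])).continuousAt.continuousWithinAt
    · intro t ht
      rw [interior_Icc] at ht
      exact (hu t (by linarith [ht.1])).differentiableAt.differentiableWithinAt
    · intro t ht
      rw [interior_Icc] at ht
      have ht0 : 0 < t := by linarith [ht.1]
      rw [(hu t ht0).deriv]
      apply div_nonpos_of_nonpos_of_nonneg _ (by positivity)
      have := halfplane_second φ hdiff hinj t ht0
      nlinarith
  have h := hanti (left_mem_Icc.2 hT) (right_mem_Icc.2 hT) hT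
  have hun : ∀ t : ℝ, u t = ‖deriv φ t‖ ^ 2 / t ^ 2 := by
    intro t
    simp only [u, ← Complex.normSq_eq_norm_sq, Complex.normSq_apply]
    ring
  rw [hun, hun, div_le_iff₀ (by positivity)] at h
  simp only [Complex.ofReal_one] at h
  apply le_of_sq_le_sq _ (by positivity)
  rw [mul_pow]
  linarith

end Aux

/-- Inequality (33.3) in the proof of Lemma 5.1: the Hölder estimate at scale `T`
propagates to the square `Q_T`. -/
theorem holder_on_QT (φ : ℂ → ℂ) (H α T : ℝ)
    (hH : 0 < H) (hα : 0 < α) (hα1 : α ≤ 1) (hT : 1 ≤ T)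
    (hdiff : DifferentiableOn ℂ φ {z : ℂ | 0 < z.re})
    (hinj : Set.InjOn φ {z : ℂ | 0 < z.re})
    (hHol : ∀ w₁ ∈ Qsq 1, ∀ w₂ ∈ Qsq 1,
      ‖φ ((T : ℂ) * w₁) - φ ((T : ℂ) * w₂)‖
        ≤ H * T * ‖deriv φ (T : ℂ)‖ * ‖w₁ - w₂‖ ^ α) :
    ∀ z₁ ∈ Qsq T, ∀ z₂ ∈ Qsq T,
      ‖φ z₁ - φ z₂‖ ≤ 8 * H * ‖deriv φ 1‖ * T ^ (2 - α) * ‖z₁ - z₂‖ ^ α := by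
  intro z₁ hz₁ z₂ hz₂
  have hT0 : 0 < T := by linarith
  have hTc : (T : ℂ) ≠ 0 := by exact_mod_cast hT0.ne'
  have hmem : ∀ z ∈ Qsq T, z / T ∈ Qsq 1 := by
    rintro z ⟨h1, h2, h3, h4⟩
    refine ⟨?_, ?_, ?_, ?_⟩
    · rw [Complex.div_ofReal_re]; positivity
    · rw [Complex.div_ofReal_re, div_lt_iff₀ hT0]; linarith
    · rw [Complex.div_ofReal_im, lt_div_iff₀ hT0]; linarith
    · rw [Complex.div_ofReal_im, div_lt_iff₀ hT0]; linarith
  have h := hHol _ (hmem z₁ hz₁) _ (hmem z₂ hz₂)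
  rw [mul_div_cancel₀ _ hTc, mul_div_cancel₀ _ hTc, ← sub_div, norm_div, Complex.norm_real,
    Real.norm_of_nonneg hT0.le, Real.div_rpow (norm_nonneg _) hT0.le] at h
  have hd := halfplane_distortion φ hdiff hinj T hT
  refine h.trans ?_
  have hp : T ^ (2 - α) = T ^ 2 / T ^ α := by
    rw [Real.rpow_sub hT0]; norm_cast
  rw [hp]
  have hTa : 0 < T ^ α := Real.rpow_pos_of_pos hT0 _
  calc H * T * ‖deriv φ T‖ * (‖z₁ - z₂‖ ^ α / T ^ α)
      ≤ H * T * (T * ‖deriv φ 1‖) * (‖z₁ - z₂‖ ^ α / T ^ α) := by gcongr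
    _ = 1 * (H * ‖deriv φ 1‖ * (T ^ 2 / T ^ α) * ‖z₁ - z₂‖ ^ α) := by ring
    _ ≤ 8 * (H * ‖deriv φ 1‖ * (T ^ 2 / T ^ α) * ‖z₁ - z₂‖ ^ α) := by
        gcongr; norm_num
    _ = _ := by ring
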